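/- Consider the single-source reachability choice program on a finite directed graph (N, E) with edge costs c : E → ℕ and source a ∈ N. Then in every choice model M of this program: (i) the set {y ∈ N : ∃k, reach(y,k) ∈ M} equals the set of nodes reachable from a by a directed path in (N, E); (ii) reach(a,0) ∈ M and for every reachable y ≠ a there is exactly one k with reach(y,k) ∈ M, and this k is the total cost of some directed simple path from a to y. -/

import Mathlib

/-!
The atoms of a stable model obey rule induction (`isStableModel.induction`), and each of them is
the head of a rule whose body holds (`isStableModel.support`).

The rules `chosen`/`diffchoice` enforce the functional dependency, so each node carries at most one
label `k` with `reach(y,k) ∈ M` (`reach_unique`). By rule induction every `reach(y,k) ∈ M` is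
witnessed by a simple path of cost `k` from `a` to `y` all of whose prefixes are themselves
recorded in `M` (`LPath`, `exists_lpath`): when a derivation step returns to a node already on the
path, uniqueness of labels shows that the prefix ending there has the same cost.

Conversely labels propagate along edges (`exists_reach`). Given a labelled simple path to `x` and an
edge `(x,y)`, either `y` is on the path and has a label, or the extended path is simple and so has
cost at most `K = (|N| - 1) · max c`. Then either `chosen(y,k)` holds for the new cost, or it is
blocked by `diffchoice(y,k)`, which requires some other `chosen(y,k')`; both give `y` a label.
-/

/-- A ground rule: head, positive body, negative body. -/
structure GroundRule (A : Type) where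
  head : A
  pos : Finset A
  neg : Finset A

/-- An interpretation `I` satisfies a ground rule. -/
def satisfiesRule {A : Type} (I : Set A) (r : GroundRule A) : Prop :=
  ((↑r.pos : Set A) ⊆ I ∧ ∀ a ∈ r.neg, a ∉ I) → r.head ∈ I

/-- `I` is a model of the ground program `P`. -/
def isModel {A : Type} (P : Set (GroundRule A)) (I : Set A) : Prop :=
  ∀ r ∈ P, satisfiesRule I r

/-- The immediate consequence operator `T_P`. -/
def TP {A : Type} (P : Set (GroundRule A)) (I : Set A) : Set A :=
  { a | ∃ r ∈ P, r.head = a ∧ (↑r.pos : Set A) ⊆ I ∧ ∀ b ∈ r.neg, b ∉ I }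

/-- The reduct of `P` with respect to `M`. -/
def reduct {A : Type} (P : Set (GroundRule A)) (M : Set A) : Set (GroundRule A) :=
  { r' | ∃ r ∈ P, (∀ b ∈ r.neg, b ∉ M) ∧ r' = ⟨r.head, r.pos, ∅⟩ }

/-- `M` is the least model of `P`. -/
def isLeastModel {A : Type} (P : Set (GroundRule A)) (M : Set A) : Prop :=
  isModel P M ∧ ∀ M', isModel P M' → M ⊆ M'

/-- `M` is a stable model of `P`: it is the least model of the reduct of `P` w.r.t. `M`. -/
def isStableModel {A : Type} (P : Set (GroundRule A)) (M : Set A) : Prop :=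
  isLeastModel (reduct P M) M

/-- Inflationary iteration `F^n(J)` where `F(I) = I ∪ T(I)`. -/
def iterT {A : Type} (T : Set A → Set A) (J : Set A) : ℕ → Set A
  | 0 => J
  | n + 1 => iterT T J n ∪ T (iterT T J n)

/-- `T^{↑ω}(J) = ⋃ₙ Fⁿ(J)` where `F(I) = I ∪ T(I)`. -/
def Tomega {A : Type} (T : Set A → Set A) (J : Set A) : Set A :=
  ⋃ n, iterT T J n

/-- Atoms of the single-source reachability choice program. -/
inductive RAtom (N : Type) : Type where
  | g : N → N → ℕ → RAtom N
  | reach : N → ℕ → RAtom N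
  | chosen : N → ℕ → RAtom N
  | diffchoice : N → ℕ → RAtom N
deriving DecidableEq

variable {N : Type} [DecidableEq N] [Fintype N]

/-- The bound `K = (|N| - 1) · (max edge cost)`. -/
def reachK (E : Finset (N × N)) (c : N × N → ℕ) : ℕ :=
  (Fintype.card N - 1) * E.sup c

/-- `foe` of the reachability choice program with edges `E`, costs `c` and
source `a`: the fact `reach(a,0)`, the `g`-facts, the recursive `reach` rules,
the chosen rules and the diffchoice rules (tuples `(y,k)`, `(y',k')` conflict
iff `y = y'` and `k ≠ k'`, the FD `Y → C`). -/
def reachFoe (E : Finset (N × N)) (c : N × N → ℕ) (a : N) :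
    Set (GroundRule (RAtom N)) :=
  {⟨RAtom.reach a 0, ∅, ∅⟩} ∪
  { ru | ∃ e ∈ E, ru = ⟨RAtom.g e.1 e.2 (c e), ∅, ∅⟩ } ∪
  { ru | ∃ e ∈ E, ∃ k1 : ℕ, e.2 ≠ a ∧ k1 + c e ≤ reachK E c ∧
      ru = ⟨RAtom.reach e.2 (k1 + c e),
            {RAtom.reach e.1 k1, RAtom.g e.1 e.2 (c e), RAtom.chosen e.2 (k1 + c e)},
            ∅⟩ } ∪
  { ru | ∃ e ∈ E, ∃ k1 : ℕ, e.2 ≠ a ∧ k1 + c e ≤ reachK E c ∧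
      ru = ⟨RAtom.chosen e.2 (k1 + c e),
            {RAtom.reach e.1 k1, RAtom.g e.1 e.2 (c e)},
            {RAtom.diffchoice e.2 (k1 + c e)}⟩ } ∪
  { ru | ∃ (y : N) (k k' : ℕ), k ≠ k' ∧
      ru = ⟨RAtom.diffchoice y k, {RAtom.chosen y k'}, ∅⟩ }

/-- `y` is reachable from `a` by a directed path along edges of `E`. -/
def reachableFrom (E : Finset (N × N)) (a y : N) : Prop :=
  Relation.ReflTransGen (fun u v => (u, v) ∈ E) a y

/-- `k` is the total cost of some directed simple path from `a` to `y` in `E`. -/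
def isSimplePathCost (E : Finset (N × N)) (c : N × N → ℕ) (a y : N) (k : ℕ) : Prop :=
  ∃ zs : List N, zs.Nodup ∧ zs.head? = some a ∧ zs.getLast? = some y ∧
    (∀ p ∈ zs.zip zs.tail, p ∈ E) ∧ k = ((zs.zip zs.tail).map c).sum

/-! ### Stable models: induction and support -/

/-- Rule induction for a stable model: intersecting the least model of the reduct with a property
preserved by the rules gives again a model, so every atom has the property. -/
theorem isStableModel.induction {A : Type} {P : Set (GroundRule A)} {M : Set A}
    (hM : isStableModel P M) (Q : A → Prop)
    (h : ∀ r ∈ P, (∀ b ∈ r.neg, b ∉ M) → (∀ b ∈ r.pos, b ∈ M ∧ Q b) → Q r.head) :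
    ∀ b ∈ M, Q b := by
  intro b hb
  have hsub : M ⊆ {b | b ∈ M ∧ Q b} := by
    apply hM.2
    rintro r' hr' ⟨hpos, hneg⟩
    obtain ⟨r, hr, hrneg, rfl⟩ := id hr'
    refine ⟨hM.1 _ hr' ⟨fun x hx => (hpos hx).1, by simp⟩, ?_⟩
    exact h r hr hrneg fun x hx => hpos (Finset.mem_coe.2 hx)
  exact (hsub hb).2

theorem isStableModel.closed {A : Type} {P : Set (GroundRule A)} {M : Set A}
    (hM : isStableModel P M) (r : GroundRule A) (hr : r ∈ P)
    (hpos : ∀ b ∈ r.pos, b ∈ M) (hneg : ∀ b ∈ r.neg, b ∉ M) : r.head ∈ M :=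
  hM.1 ⟨r.head, r.pos, ∅⟩ ⟨r, hr, hneg, rfl⟩ ⟨fun x hx => hpos x hx, by simp⟩

theorem isStableModel.support {A : Type} {P : Set (GroundRule A)} {M : Set A}
    (hM : isStableModel P M) :
    ∀ b ∈ M, ∃ r ∈ P, r.head = b ∧ (∀ x ∈ r.pos, x ∈ M) ∧ ∀ x ∈ r.neg, x ∉ M :=
  hM.induction _ fun r hr hneg hpos => ⟨r, hr, rfl, fun x hx => (hpos x hx).1, hneg⟩

/-! ### Choice models of the reachability program -/

section ChoiceModel

variable {E : Finset (N × N)} {c : N × N → ℕ} {a : N} {M : Set (RAtom N)}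

theorem reach_source (hM : isStableModel (reachFoe E c a) M) : RAtom.reach a 0 ∈ M :=
  hM.closed ⟨RAtom.reach a 0, ∅, ∅⟩ (by simp [reachFoe]) (by simp) (by simp)

theorem g_mem (hM : isStableModel (reachFoe E c a) M) {x y : N} (he : (x, y) ∈ E) :
    RAtom.g x y (c (x, y)) ∈ M :=
  hM.closed ⟨RAtom.g x y (c (x, y)), ∅, ∅⟩
    (Or.inl (Or.inl (Or.inl (Or.inr ⟨(x, y), he, rfl⟩)))) (by simp) (by simp)

theorem reach_step (hM : isStableModel (reachFoe E c a) M) {x y : N} {k : ℕ}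
    (he : (x, y) ∈ E) (hy : y ≠ a) (hk : k + c (x, y) ≤ reachK E c)
    (hx : RAtom.reach x k ∈ M) (hc : RAtom.chosen y (k + c (x, y)) ∈ M) :
    RAtom.reach y (k + c (x, y)) ∈ M :=
  hM.closed _ (Or.inl (Or.inl (Or.inr ⟨(x, y), he, k, hy, hk, rfl⟩)))
    (by simp [hx, hc, g_mem hM he]) (by simp)

theorem chosen_step (hM : isStableModel (reachFoe E c a) M) {x y : N} {k : ℕ}
    (he : (x, y) ∈ E) (hy : y ≠ a) (hk : k + c (x, y) ≤ reachK E c)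
    (hx : RAtom.reach x k ∈ M) (hd : RAtom.diffchoice y (k + c (x, y)) ∉ M) :
    RAtom.chosen y (k + c (x, y)) ∈ M :=
  hM.closed _ (Or.inl (Or.inr ⟨(x, y), he, k, hy, hk, rfl⟩))
    (by simp [hx, g_mem hM he]) (by simpa using hd)

theorem diffchoice_step (hM : isStableModel (reachFoe E c a) M) {y : N} {k k' : ℕ}
    (hk : k ≠ k') (hc : RAtom.chosen y k' ∈ M) : RAtom.diffchoice y k ∈ M :=
  hM.closed ⟨RAtom.diffchoice y k, {RAtom.chosen y k'}, ∅⟩ (Or.inr ⟨y, k, k', hk, rfl⟩)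
    (by simpa using hc) (by simp)

theorem reach_cases (hM : isStableModel (reachFoe E c a) M) {y : N} {k : ℕ}
    (h : RAtom.reach y k ∈ M) : (y = a ∧ k = 0) ∨ (y ≠ a ∧ RAtom.chosen y k ∈ M) := by
  obtain ⟨r, hr, hh, hpos, -⟩ := hM.support _ h
  rcases hr with (((hr | ⟨e, he, hr⟩) | ⟨e, he, k1, hy, hk, hr⟩) | ⟨e, he, k1, hy, hk, hr⟩) |
    ⟨z, k1, k2, hk, hr⟩
  all_goals cases hr; simp at hh
  · left; exact ⟨hh.1.symm, hh.2.symm⟩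
  · obtain ⟨rfl, rfl⟩ := hh
    exact Or.inr ⟨hy, hpos _ (by simp)⟩

theorem chosen_cases (hM : isStableModel (reachFoe E c a) M) {y : N} {k : ℕ}
    (h : RAtom.chosen y k ∈ M) :
    RAtom.reach y k ∈ M ∧ RAtom.diffchoice y k ∉ M := by
  obtain ⟨r, hr, hh, hpos, hneg⟩ := hM.support _ h
  rcases hr with (((hr | ⟨e, he, hr⟩) | ⟨e, he, k1, hy, hk, hr⟩) | ⟨e, he, k1, hy, hk, hr⟩) |
    ⟨z, k1, k2, hk, hr⟩
  all_goals cases hr; simp at hh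
  obtain ⟨rfl, rfl⟩ := hh
  exact ⟨reach_step hM he hy hk (hpos _ (by simp)) h, hneg _ (by simp)⟩

theorem diffchoice_cases (hM : isStableModel (reachFoe E c a) M) {y : N} {k : ℕ}
    (h : RAtom.diffchoice y k ∈ M) : ∃ k', RAtom.chosen y k' ∈ M := by
  obtain ⟨r, hr, hh, hpos, hneg⟩ := hM.support _ h
  rcases hr with (((hr | ⟨e, he, hr⟩) | ⟨e, he, k1, hy, hk, hr⟩) | ⟨e, he, k1, hy, hk, hr⟩) |
    ⟨z, k1, k2, hk, hr⟩
  all_goals cases hr; simp at hh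
  obtain ⟨rfl, rfl⟩ := hh
  exact ⟨k2, hpos _ (by simp)⟩

/-- The functional dependency: `chosen(y,k)` makes every other `diffchoice(y,k')` true, which
blocks `chosen(y,k')`. At the source only `reach(a,0)` can be derived. -/
theorem reach_unique (hM : isStableModel (reachFoe E c a) M) {y : N} {k k' : ℕ}
    (h : RAtom.reach y k ∈ M) (h' : RAtom.reach y k' ∈ M) : k = k' := by
  rcases reach_cases hM h with ⟨hy, hk⟩ | ⟨hy, hc⟩ <;>
    rcases reach_cases hM h' with ⟨hy', hk'⟩ | ⟨hy', hc'⟩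
  · rw [hk, hk']
  · exact absurd hy hy'
  · exact absurd hy' hy
  · by_contra hne
    exact (chosen_cases hM hc).2 (diffchoice_step hM hne hc')

/-! ### Labelled simple paths -/

/-- `LPath E c a M l y k`: the list `l` is a simple path of total cost `k` from `a` to `y` in `E`,
and every prefix of it, ending at `z` with cost `j`, satisfies `reach(z,j) ∈ M`. -/
inductive LPath (E : Finset (N × N)) (c : N × N → ℕ) (a : N) (M : Set (RAtom N)) :
    List N → N → ℕ → Prop
  | nil : RAtom.reach a 0 ∈ M → LPath E c a M [a] a 0
  | snoc {l x y k} : LPath E c a M l x k → (x, y) ∈ E → y ∉ l →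
      RAtom.reach y (k + c (x, y)) ∈ M → LPath E c a M (l ++ [y]) y (k + c (x, y))

theorem LPath.reach_mem {l : List N} {y : N} {k : ℕ} (h : LPath E c a M l y k) :
    RAtom.reach y k ∈ M := by
  cases h <;> assumption

theorem LPath.exists_prefix {l : List N} {y : N} {k : ℕ} (h : LPath E c a M l y k) :
    ∀ z ∈ l, ∃ l' k', LPath E c a M l' z k' := by
  induction h with
  | nil h0 =>
    intro z hz
    obtain rfl : z = a := by simpa using hz
    exact ⟨_, _, .nil h0⟩
  | snoc hp he hy hr ih =>
    intro z hz
    rcases List.mem_append.1 hz with hz | hz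
    · exact ih z hz
    · rw [List.mem_singleton.1 hz]
      exact ⟨_, _, .snoc hp he hy hr⟩

theorem LPath.nodup {l : List N} {y : N} {k : ℕ} (h : LPath E c a M l y k) : l.Nodup := by
  induction h with
  | nil h0 => simp
  | snoc hp he hy hr ih =>
    exact List.nodup_append.2 ⟨ih, List.nodup_singleton _, fun b hb d hd hbd =>
      hy (List.mem_singleton.1 hd ▸ hbd ▸ hb)⟩

theorem LPath.cost_le {l : List N} {y : N} {k : ℕ} (h : LPath E c a M l y k) :
    l ≠ [] ∧ k ≤ (l.length - 1) * E.sup c := by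
  induction h with
  | nil h0 => simp
  | @snoc l x y k hp he hy hr ih =>
    refine ⟨by simp, ?_⟩
    have h1 : c (x, y) ≤ E.sup c := Finset.le_sup he
    obtain ⟨n, hn⟩ := Nat.exists_eq_succ_of_ne_zero (mt List.length_eq_zero_iff.1 ih.1)
    have h2 := ih.2
    simp only [hn, List.length_append, List.length_singleton, Nat.succ_eq_add_one,
      Nat.add_sub_cancel] at h2 ⊢
    linarith [add_mul n 1 (E.sup c)]

theorem LPath.reachable {l : List N} {y : N} {k : ℕ} (h : LPath E c a M l y k) :
    reachableFrom E a y := by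
  induction h with
  | nil h0 => exact .refl
  | snoc hp he hy hr ih => exact .tail ih he

theorem zip_tail_append_singleton {α : Type} (l : List α) (x y : α) (h : l.getLast? = some x) :
    (l ++ [y]).zip (l ++ [y]).tail = l.zip l.tail ++ [(x, y)] := by
  induction l with
  | nil => simp at h
  | cons b l ih =>
    cases l with
    | nil => simpa using h
    | cons d l =>
      have := ih (by simpa using h)
      simpa using this

theorem LPath.isSimplePathCost {l : List N} {y : N} {k : ℕ} (h : LPath E c a M l y k) :
    isSimplePathCost E c a y k := by
  refine ⟨l, h.nodup, ?_⟩
  induction h with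
  | nil h0 => simp
  | @snoc l x y k hp he hy hr ih =>
    obtain ⟨h1, h2, h3, h4⟩ := ih
    rw [zip_tail_append_singleton l x y h2]
    refine ⟨by simp [List.head?_append, h1], by simp, ?_, by simp [h4]⟩
    intro p hp
    rcases List.mem_append.1 hp with hp | hp
    · exact h3 p hp
    · rw [List.mem_singleton.1 hp]; exact he

/-- Every `reach` atom of a choice model comes from a labelled simple path. A derivation step to a
node `y` already on the path (possible along a cycle of cost zero) is discarded: the prefix ending
at `y` has the same cost by `reach_unique`. -/
theorem exists_lpath (hM : isStableModel (reachFoe E c a) M) {y : N} {k : ℕ}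
    (h : RAtom.reach y k ∈ M) : ∃ l, LPath E c a M l y k := by
  have key : ∀ b ∈ M, ∀ y k, b = RAtom.reach y k → ∃ l, LPath E c a M l y k := by
    apply hM.induction
    intro r hr hneg hpos y k hh
    rcases hr with (((hr | ⟨e, he, hr⟩) | ⟨e, he, k1, hy, hk, hr⟩) | ⟨e, he, k1, hy, hk, hr⟩) |
      ⟨z, k1, k2, hk, hr⟩
    all_goals cases hr; simp at hh
    · obtain ⟨rfl, rfl⟩ := hh
      exact ⟨_, .nil (reach_source hM)⟩
    · obtain ⟨rfl, rfl⟩ := hh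
      obtain ⟨hx, hpath⟩ := hpos (RAtom.reach e.1 k1) (by simp)
      obtain ⟨l, hl⟩ := hpath _ _ rfl
      have hr : RAtom.reach e.2 (k1 + c e) ∈ M :=
        reach_step hM he hy hk hx (hpos _ (by simp)).1
      by_cases hyl : e.2 ∈ l
      · obtain ⟨l', k', hl'⟩ := hl.exists_prefix _ hyl
        rw [reach_unique hM hr hl'.reach_mem]
        exact ⟨l', hl'⟩
      · exact ⟨_, .snoc hl he hyl hr⟩
  exact key _ h _ _ rfl

/-- The bound `K` never blocks the first arrival at a node `y`: a simple path avoiding `y` has at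
most `|N| - 1` nodes, so adding the edge into `y` costs at most `K` in total. If `chosen(y,k)`
fails for this cost `k`, then `diffchoice(y,k)` holds, and another `chosen(y,k')` supports it. -/
theorem exists_reach (hM : isStableModel (reachFoe E c a) M) {y : N}
    (h : reachableFrom E a y) : ∃ k, RAtom.reach y k ∈ M := by
  induction h with
  | refl => exact ⟨0, reach_source hM⟩
  | @tail x y _ he ih =>
    obtain ⟨k, hk⟩ := ih
    obtain ⟨l, hl⟩ := exists_lpath hM hk
    by_cases hyl : y ∈ l
    · obtain ⟨l', k', hl'⟩ := hl.exists_prefix _ hyl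
      exact ⟨k', hl'.reach_mem⟩
    by_cases hya : y = a
    · exact ⟨0, hya ▸ reach_source hM⟩
    have hbound : k + c (x, y) ≤ reachK E c := by
      have hcard : (y :: l).length ≤ Fintype.card N :=
        (List.nodup_cons.2 ⟨hyl, hl.nodup⟩).length_le_card
      have hpos : 0 < l.length := List.length_pos_iff.2 hl.cost_le.1
      have h1 : c (x, y) ≤ E.sup c := Finset.le_sup he
      rw [List.length_cons] at hcard
      calc k + c (x, y) ≤ (l.length - 1) * E.sup c + E.sup c := add_le_add hl.cost_le.2 h1
        _ = (l.length - 1 + 1) * E.sup c := by ring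
        _ ≤ (Fintype.card N - 1) * E.sup c := Nat.mul_le_mul_right _ (by omega)
    by_cases hd : RAtom.diffchoice y (k + c (x, y)) ∈ M
    · obtain ⟨k', hk'⟩ := diffchoice_cases hM hd
      exact ⟨k', (chosen_cases hM hk').1⟩
    · exact ⟨_, reach_step hM he hya hbound hk (chosen_step hM he hya hbound hk hd)⟩

end ChoiceModel

/-- in every choice model `M` of the single-source reachability
program, (i) the nodes with some `reach` atom in `M` are exactly the nodes
reachable from `a`; (ii) `reach(a,0) ∈ M`, and every reachable `y ≠ a` has
exactly one `k` with `reach(y,k) ∈ M`, this `k` being the total cost of some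
directed simple path from `a` to `y`. -/
theorem reachability_choice_model
    (E : Finset (N × N)) (c : N × N → ℕ) (a : N)
    (M : Set (RAtom N)) (hM : isStableModel (reachFoe E c a) M) :
    ({ y : N | ∃ k, RAtom.reach y k ∈ M } = { y : N | reachableFrom E a y }) ∧
    RAtom.reach a 0 ∈ M ∧
    ∀ y : N, reachableFrom E a y → y ≠ a →
      (∃! k, RAtom.reach y k ∈ M) ∧
      ∀ k, RAtom.reach y k ∈ M → isSimplePathCost E c a y k := by
  refine ⟨?_, reach_source hM, ?_⟩
  · ext y
    constructor
    · rintro ⟨k, hk⟩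
      obtain ⟨l, hl⟩ := exists_lpath hM hk
      exact hl.reachable
    · exact exists_reach hM
  · intro y hy _
    obtain ⟨k, hk⟩ := exists_reach hM hy
    refine ⟨⟨k, hk, fun k' hk' => reach_unique hM hk' hk⟩, fun k' hk' => ?_⟩
    obtain ⟨l, hl⟩ := exists_lpath hM hk'
    exact hl.isSimplePathCost
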